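/- arXiv:2405.06122 — 10 statements merged into one kernel-verified Lean document; each statement's English description precedes it below -/
import Mathlib

section
/- Let R be a (unital, possibly noncommutative) ring and M a free left R-module. Then the following three conditions are equivalent: (1) M is Hopfian, i.e. every surjective R-linear endomorphism f : M → M is injective; (2) the endomorphism ring of M is Dedekind-finite, i.e. for all R-linear endomorphisms f, g of M, f ∘ g = id implies g ∘ f = id; (3) for every R-module N, if M is R-linearly isomorphic to the product module M × N, then N is trivial (every element of N equals 0). -/
/-- A right inverse `g` of an endomorphism `f` of `M` identifies `M` with `M × ker f`. -/
def LinearMap.equivProdKerOfRightInverse {R M : Type*} [Ring R] [AddCommGroup M] [Module R M]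
    (f g : M →ₗ[R] M) (hfg : ∀ x, f (g x) = x) : M ≃ₗ[R] M × LinearMap.ker f where
  toLinearMap := f.prod ((LinearMap.id - g ∘ₗ f).codRestrict (LinearMap.ker f) fun x => by
    simp [hfg])
  invFun p := g p.1 + p.2
  left_inv x := by simp
  right_inv p := by ext <;> simp [hfg]

/-- For a free left module `M` over a (possibly noncommutative) ring `R`,
the following are equivalent:
(1) `M` is Hopfian (every surjective `R`-linear endomorphism is injective);
(2) the endomorphism ring of `M` is Dedekind-finite;
(3) `M ≃ₗ[R] M × N` forces `N` to be trivial. -/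
theorem hopfian_iff_dedekindFinite_iff_cancel
    {R : Type*} [Ring R] {M : Type v} [AddCommGroup M] [Module R M] [Module.Free R M] :
    ((∀ f : M →ₗ[R] M, Function.Surjective f → Function.Injective f) ↔
      (∀ f g : M →ₗ[R] M, f ∘ₗ g = LinearMap.id → g ∘ₗ f = LinearMap.id)) ∧
    ((∀ f : M →ₗ[R] M, Function.Surjective f → Function.Injective f) ↔
      (∀ (N : Type v) [AddCommGroup N] [Module R N],
        Nonempty (M ≃ₗ[R] (M × N)) → ∀ x : N, x = 0)) := by
  refine ⟨⟨fun h f g hfg => ?_, fun h f hf => ?_⟩, ⟨fun h N _ _ ⟨e⟩ x => ?_, fun h f hf => ?_⟩⟩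
  · have hfg' : Function.RightInverse g f := LinearMap.congr_fun hfg
    exact LinearMap.ext (hfg'.leftInverse_of_injective (h f hfg'.surjective))
  · obtain ⟨g, hg⟩ := Module.projective_lifting_property f LinearMap.id hf
    exact Function.LeftInverse.injective (LinearMap.congr_fun (h f g hg))
  · have hinj := h (LinearMap.fst R M N ∘ₗ e) (Prod.fst_surjective.comp e.surjective)
    have hx : e.symm (0, x) = 0 := hinj (by simp)
    simpa using hx
  · obtain ⟨g, hg⟩ := Module.projective_lifting_property f LinearMap.id hf
    refine (injective_iff_map_eq_zero f).2 fun x hx => ?_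
    exact congrArg Subtype.val <| h (LinearMap.ker f)
      ⟨f.equivProdKerOfRightInverse g (LinearMap.congr_fun hg)⟩ ⟨x, hx⟩
end

section
/- Let R be a stably finite ring and let v₀, v₁, v₂, v₃ ∈ (Fin 3 → R) be such that the 3×3 matrix with rows v₀, v₁, v₂ is a unit in Matrix (Fin 3) (Fin 3) R, and the 3×3 matrix with rows v₁, v₂, v₃ is also a unit. Let P be the submodule ((span R {v₀}) ⊔ (span R {v₁})) ⊓ ((span R {v₂}) ⊔ (span R {v₃})) of Fin 3 → R. Then P is a rank one subspace: there exists u ∈ (Fin 3 → R) with P = span R {u} and an R-linear map ξ : (Fin 3 → R) → R with ξ(u) = 1. (This is the statement that the lines through v₀, v₁ and through v₂, v₃ in the projective plane over R meet at a single point.) -/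
/-- A ring `R` is stably finite if for every `n`, every surjective `R`-linear
endomorphism of the free module `Fin n → R` is injective. -/
def StablyFinite (R : Type*) [Ring R] : Prop :=
  ∀ n : ℕ, ∀ f : (Fin n → R) →ₗ[R] (Fin n → R), Function.Surjective f → Function.Injective f

/-- The rows of an invertible matrix form a basis; `f` is the family of coordinate functionals. -/
lemma exists_coordinates_of_isUnit {R n : Type*} [Ring R] [Fintype n] [DecidableEq n]
    {M : Matrix n n R} (hM : IsUnit M) :
    ∃ f : n → (n → R) →ₗ[R] R,
      (∀ i j, f i (M j) = if j = i then 1 else 0) ∧ ∀ x, x = ∑ i, f i x • M i := by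
  obtain ⟨N, hMN, hNM⟩ := isUnit_iff_exists.mp hM
  refine ⟨fun i => LinearMap.proj i ∘ₗ N.vecMulLinear, fun i j => ?_, fun x => ?_⟩
  · exact (congrFun (congrFun hMN j) i).trans (Matrix.one_apply ..)
  · have h : Matrix.vecMul (Matrix.vecMul x N) M = x := by
      rw [Matrix.vecMul_vecMul, hNM, Matrix.vecMul_one]
    exact h.symm.trans (Matrix.vecMul_eq_sum ..)

/-- Over a stably finite ring `R`, if the triples `v₀, v₁, v₂` and
`v₁, v₂, v₃` each form a basis of `Fin 3 → R` (equivalently, the matrices with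
those rows are units), then the intersection of the lines
`span {v₀} ⊔ span {v₁}` and `span {v₂} ⊔ span {v₃}` is a rank one subspace:
it is the span of a unimodular element. -/
theorem lines_meet_at_point_of_stablyFinite
    {R : Type*} [Ring R] (hSF : StablyFinite R)
    (v₀ v₁ v₂ v₃ : Fin 3 → R)
    (h012 : IsUnit (Matrix.of ![v₀, v₁, v₂]))
    (h123 : IsUnit (Matrix.of ![v₁, v₂, v₃])) :
    ∃ u : Fin 3 → R,
      (Submodule.span R {v₀} ⊔ Submodule.span R {v₁}) ⊓
        (Submodule.span R {v₂} ⊔ Submodule.span R {v₃}) = Submodule.span R {u} ∧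
      ∃ ξ : (Fin 3 → R) →ₗ[R] R, ξ u = 1 := by
  obtain ⟨f, hf, hfx⟩ := exists_coordinates_of_isUnit h012
  obtain ⟨g, hg, -⟩ := exists_coordinates_of_isUnit h123
  have hf0 : f 2 v₀ = 0 := hf 2 0
  have hf1 : f 2 v₁ = 0 := hf 2 1
  have hf2 : f 2 v₂ = 1 := hf 2 2
  have hg2 : g 2 v₂ = 0 := hg 2 1
  have hg3 : g 2 v₃ = 1 := hg 2 2
  have hv₃ : v₃ = f 0 v₃ • v₀ + f 1 v₃ • v₁ + f 2 v₃ • v₂ :=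
    (hfx v₃).trans (Fin.sum_univ_three _)
  refine ⟨v₃ - f 2 v₃ • v₂, le_antisymm ?_ ?_, g 2, by simp [hg2, hg3]⟩
  · rintro x ⟨h₁, h₂⟩
    rw [SetLike.mem_coe, ← Submodule.span_insert, Submodule.mem_span_pair] at h₁ h₂
    obtain ⟨p, q, hpq⟩ := h₁
    obtain ⟨r, s, rfl⟩ := h₂
    have hr : 0 = r + s * f 2 v₃ := by simpa [hf0, hf1, hf2] using congrArg (f 2) hpq
    refine Submodule.mem_span_singleton.mpr ⟨s, ?_⟩
    rw [eq_neg_of_add_eq_zero_left hr.symm, smul_sub, smul_smul, neg_smul]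
    abel
  · rw [Submodule.span_singleton_le_iff_mem, ← Submodule.span_insert, ← Submodule.span_insert]
    refine ⟨Submodule.mem_span_pair.mpr ⟨f 0 v₃, f 1 v₃, eq_sub_of_add_eq hv₃.symm⟩,
      Submodule.mem_span_pair.mpr ⟨-f 2 v₃, 1, ?_⟩⟩
    rw [neg_smul, one_smul]
    abel
end

section
/- Let v, p, w, q : Fin 3 → ℝ, and for a pair (u, r) of vectors in Fin 3 → ℝ let ζ(u, r) : Fin 3 → 𝔻 be the dual-number vector whose i-th entry is u i + ((u ×₃ r) i)·ε, where ×₃ is the cross product on Fin 3 → ℝ. Then the 𝔻-bilinear inner product Σᵢ ζ(v,p) i * ζ(w,q) i equals (Σᵢ v i * w i) + det(v, w, q − p)·ε, where det(v, w, q − p) is the determinant of the 3×3 real matrix with rows v, w, and q − p. -/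
open scoped DualNumber

/-- The Study vector `ζ(u, r) : Fin 3 → 𝔻` of the affine line `{r + t u}` in `ℝ³`:
its `i`-th entry is `u i + ((u ×₃ r) i)·ε`. -/
noncomputable def studyVector (u r : Fin 3 → ℝ) : Fin 3 → DualNumber ℝ :=
  fun i => TrivSqZeroExt.inl (u i) + TrivSqZeroExt.inl ((crossProduct u r) i) * DualNumber.eps

/-- The `𝔻`-bilinear inner product of the Study vectors of two
affine lines `{p + t v}` and `{q + t w}` equals `⟨v, w⟩ + det(v, w, q − p)·ε`. -/
theorem studyVector_inner
    (v p w q : Fin 3 → ℝ) :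
    ∑ i : Fin 3, studyVector v p i * studyVector w q i =
      TrivSqZeroExt.inl (∑ i : Fin 3, v i * w i) +
        TrivSqZeroExt.inl ((Matrix.of ![v, w, q - p]).det) * DualNumber.eps := by
  ext
  · simp [studyVector, Fin.sum_univ_three]
  · simp [studyVector, Fin.sum_univ_three, cross_apply, Matrix.det_fin_three]
    ring
end

section
/- Let v, p, w, q : Fin 3 → ℝ with v ≠ 0 and w ≠ 0, and let ζ(u, r) : Fin 3 → 𝔻 denote the dual-number vector with i-th entry u i + ((u ×₃ r) i)·ε. Then Σᵢ ζ(v,p) i * ζ(w,q) i = 0 in 𝔻 if and only if the affine lines {p + t v : t ∈ ℝ} and {q + t w : t ∈ ℝ} meet at a right angle, i.e. Σᵢ v i * w i = 0 and there exist s, t ∈ ℝ with p + s • v = q + t • w. (This is the incidence-preservation statement for the Study correspondence between the projective plane over the dual numbers and skewer geometry.) -/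
open scoped DualNumber

open Matrix

/-- The inner product of two Study vectors vanishes iff the directions are orthogonal and the
difference of the base points is orthogonal to the cross product of the directions. -/
lemma studyVector_inner_eq_zero_iff_coplanar (v p w q : Fin 3 → ℝ) :
    (∑ i : Fin 3, studyVector v p i * studyVector w q i = 0) ↔
      (∑ i : Fin 3, v i * w i = 0) ∧ (p - q) ⬝ᵥ crossProduct v w = 0 := by
  rw [TrivSqZeroExt.ext_iff]
  refine and_congr (by simp [studyVector, Fin.sum_univ_three]) ?_
  rw [← neg_eq_zero (a := (p - q) ⬝ᵥ crossProduct v w)]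
  refine Eq.congr ?_ rfl
  simp [studyVector, Fin.sum_univ_three, cross_apply, dotProduct]
  ring

/-- Expansion of `d` in terms of `v`, `w` and `v ×₃ w`, cleared of denominators. -/
lemma gram_mul_apply_eq (v w d : Fin 3 → ℝ) (i : Fin 3) :
    ((v ⬝ᵥ v) * (w ⬝ᵥ w) - (v ⬝ᵥ w) ^ 2) * d i =
      (d ⬝ᵥ crossProduct v w) * crossProduct v w i
        + (d ⬝ᵥ w) * ((v ⬝ᵥ v) * w i - (v ⬝ᵥ w) * v i)
        + (d ⬝ᵥ v) * ((w ⬝ᵥ w) * v i - (v ⬝ᵥ w) * w i) := by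
  fin_cases i <;> simp [cross_apply, dotProduct, Fin.sum_univ_three] <;> ring

/-- A vector orthogonal to the cross product of two nonzero orthogonal vectors is the sum of its
projections onto them. -/
lemma eq_add_smul_of_orthogonal_of_coplanar {v w d : Fin 3 → ℝ} (hv : v ≠ 0) (hw : w ≠ 0)
    (h : v ⬝ᵥ w = 0) (hd : d ⬝ᵥ crossProduct v w = 0) :
    d = (d ⬝ᵥ v / (v ⬝ᵥ v)) • v + (d ⬝ᵥ w / (w ⬝ᵥ w)) • w := by
  have hV : v ⬝ᵥ v ≠ 0 := mt dotProduct_self_eq_zero.mp hv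
  have hW : w ⬝ᵥ w ≠ 0 := mt dotProduct_self_eq_zero.mp hw
  ext i
  have key : (v ⬝ᵥ v) * (w ⬝ᵥ w) * d i
      = (w ⬝ᵥ w) * (d ⬝ᵥ v) * v i + (v ⬝ᵥ v) * (d ⬝ᵥ w) * w i := by
    linear_combination (crossProduct v w i) * hd
      + ((v ⬝ᵥ w) * d i - (d ⬝ᵥ w) * v i - (d ⬝ᵥ v) * w i) * h
      + gram_mul_apply_eq v w d i
  simp only [Pi.add_apply, Pi.smul_apply, smul_eq_mul]
  field_simp
  linear_combination key

/-- For nonzero `v, w`, the `𝔻`-bilinear inner product of the Study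
vectors of the affine lines `{p + t v}` and `{q + t w}` vanishes iff the lines
meet at a right angle, i.e. `⟨v, w⟩ = 0` and the lines have a common point. -/
theorem studyVector_inner_eq_zero_iff
    (v p w q : Fin 3 → ℝ) (hv : v ≠ 0) (hw : w ≠ 0) :
    (∑ i : Fin 3, studyVector v p i * studyVector w q i = 0) ↔
      ((∑ i : Fin 3, v i * w i = 0) ∧ ∃ s t : ℝ, p + s • v = q + t • w) := by
  rw [studyVector_inner_eq_zero_iff_coplanar]
  refine and_congr_right fun h => ⟨fun hn => ?_, ?_⟩
  · refine ⟨-((p - q) ⬝ᵥ v / (v ⬝ᵥ v)), (p - q) ⬝ᵥ w / (w ⬝ᵥ w), ?_⟩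
    rw [neg_smul, ← sub_eq_add_neg, sub_eq_iff_eq_add, add_assoc, ← sub_eq_iff_eq_add', add_comm]
    exact eq_add_smul_of_orthogonal_of_coplanar hv hw h hn
  · rintro ⟨s, t, hst⟩
    have hd : p - q = t • w - s • v := by
      rw [sub_eq_sub_iff_add_eq_add, hst, add_comm]
    rw [hd, sub_dotProduct, smul_dotProduct, smul_dotProduct, dot_self_cross, dot_cross_self]
    simp
end

section
/- Let u₀, u₁, u₂ and P₀, P₁, P₂ be vectors in Fin 3 → ℝ, and let Z be the 3×3 matrix over the dual numbers 𝔻 whose i-th row is the Study vector ζ(uᵢ, Pᵢ), i.e. Z i j = uᵢ j + ((uᵢ ×₃ Pᵢ) j)·ε. Then Z is a unit in the matrix ring Matrix (Fin 3) (Fin 3) 𝔻 (equivalently, the rows ζ(uᵢ, Pᵢ) form a basis of the free 𝔻-module Fin 3 → 𝔻) if and only if the determinant of the real 3×3 matrix with rows u₀, u₁, u₂ is nonzero. (This says that three affine lines in ℝ³ span the projective plane over the dual numbers if and only if their direction vectors are linearly independent.) -/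
open scoped DualNumber

@[simp]
theorem fst_studyVector (u r : Fin 3 → ℝ) (i : Fin 3) :
    (studyVector u r i).fst = u i := by
  simp [studyVector]

/-- A square matrix over the dual numbers is a unit iff its real part is. -/
theorem DualNumber.isUnit_matrix_iff {n R : Type*} [Fintype n] [DecidableEq n] [CommRing R]
    (A : Matrix n n (DualNumber R)) :
    IsUnit A ↔ IsUnit (A.map TrivSqZeroExt.fst) := by
  rw [Matrix.isUnit_iff_isUnit_det, Matrix.isUnit_iff_isUnit_det,
    TrivSqZeroExt.isUnit_iff_isUnit_fst]
  exact iff_of_eq (congrArg IsUnit ((TrivSqZeroExt.fstHom R R R).map_det A))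

/-- The 3×3 matrix over the dual numbers whose rows are the Study
vectors `ζ(uᵢ, Pᵢ)` of three affine lines in `ℝ³` is a unit iff the determinant of
the real matrix with rows `u₀, u₁, u₂` (the direction vectors) is nonzero. -/
theorem studyVector_matrix_isUnit_iff
    (u₀ u₁ u₂ P₀ P₁ P₂ : Fin 3 → ℝ) :
    IsUnit (Matrix.of ![studyVector u₀ P₀, studyVector u₁ P₁, studyVector u₂ P₂] :
        Matrix (Fin 3) (Fin 3) (DualNumber ℝ)) ↔
      (Matrix.of ![u₀, u₁, u₂] : Matrix (Fin 3) (Fin 3) ℝ).det ≠ 0 := by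
  rw [DualNumber.isUnit_matrix_iff, Matrix.isUnit_iff_isUnit_det, isUnit_iff_ne_zero]
  have h : (Matrix.of ![studyVector u₀ P₀, studyVector u₁ P₁, studyVector u₂ P₂]).map
      TrivSqZeroExt.fst = Matrix.of ![u₀, u₁, u₂] := by
    ext i j
    fin_cases i <;> simp
  rw [h]
end

section
/- Let R be a ring, d ≥ 1, and let α : Fin (d+1) → (ℤ → R) define a properly bounded difference operator D' of degree d (so α 0 j and α d j are units for all j). Let β : Fin d → (ℤ → R) be coefficients of a difference operator D of degree less than d, and suppose D is not the zero operator, i.e. β i j ≠ 0 for some i, j. Then there exists a sequence a : ℤ → R with Σ_{i=0}^{d} α i j * a (j + i) = 0 for all j, but Σ_{i=0}^{d-1} β i j * a (j + i) ≠ 0 for some j. (That is, the kernel of a properly bounded operator of degree d is not contained in the kernel of any nonzero operator of smaller degree.) -/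
/-- A family of relations indexed by `ℤ` that is total in both directions admits a bi-infinite
chain through any prescribed point. -/
theorem exists_int_chain {X : Type*} (r : ℤ → X → X → Prop)
    (hfwd : ∀ j x, ∃ y, r j x y) (hbwd : ∀ j y, ∃ x, r j x y) (j₀ : ℤ) (x₀ : X) :
    ∃ W : ℤ → X, W j₀ = x₀ ∧ ∀ j, r j (W j) (W (j + 1)) := by
  choose f hf using hfwd
  choose g hg using hbwd
  let W : ℤ → X := fun j =>
    Int.inductionOn' (motive := fun _ => X) j j₀ x₀ (fun k _ x => f k x) (fun k _ y => g (k - 1) y)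
  refine ⟨W, Int.inductionOn'_self, fun j => ?_⟩
  rcases le_or_gt j₀ j with hj | hj
  · have h : W (j + 1) = f j (W j) := Int.inductionOn'_add_one hj
    exact h ▸ hf j (W j)
  · have h : W (j + 1 - 1) = g (j + 1 - 1) (W (j + 1)) := Int.inductionOn'_sub_one (by lia)
    rw [add_sub_cancel_right] at h
    exact h ▸ hg j (W (j + 1))

/-- A sequence in the kernel of a properly bounded difference operator of degree `d` can be
prescribed arbitrarily on `d` consecutive integers. -/
theorem exists_mem_kernel_eq_on_window {R : Type*} [Ring R] {d : ℕ} (α : Fin (d + 1) → ℤ → R)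
    (h0 : ∀ j : ℤ, IsUnit (α 0 j)) (hdu : ∀ j : ℤ, IsUnit (α (Fin.last d) j))
    (j₀ : ℤ) (v : Fin d → R) :
    ∃ a : ℤ → R,
      (∀ j : ℤ, ∑ i : Fin (d + 1), α i j * a (j + (i.val : ℤ)) = 0) ∧
      ∀ i : Fin d, a (j₀ + (i.val : ℤ)) = v i := by
  obtain ⟨W, hW, hchain⟩ := exists_int_chain
    (fun j (x y : Fin d → R) => ∃ u : Fin (d + 1) → R,
      (∀ i : Fin d, u i.castSucc = x i) ∧ (∀ i : Fin d, u i.succ = y i) ∧ ∑ i, α i j * u i = 0)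
    (fun j x => by
      obtain ⟨c, hc⟩ := hdu j
      let u : Fin (d + 1) → R :=
        Fin.snoc (α := fun _ => R) x (-(↑c⁻¹ * ∑ i : Fin d, α i.castSucc j * x i))
      refine ⟨fun i => u i.succ, u, fun i => by simp [u], fun _ => rfl, ?_⟩
      simp [u, Fin.sum_univ_castSucc, ← hc])
    (fun j y => by
      obtain ⟨c, hc⟩ := h0 j
      let u : Fin (d + 1) → R :=
        Fin.cons (α := fun _ => R) (-(↑c⁻¹ * ∑ i : Fin d, α i.succ j * y i)) y
      refine ⟨fun i => u i.castSucc, u, fun _ => rfl, fun i => by simp [u], ?_⟩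
      simp [u, Fin.sum_univ_succ, ← hc])
    j₀ v
  choose U hinit htail hsum using hchain
  have hU (i : Fin (d + 1)) : ∀ j : ℤ, U (j + (i.val : ℤ)) 0 = U j i := by
    induction i using Fin.induction with
    | zero => simp
    | succ i ih =>
      intro j
      rw [htail, ← hinit, ← ih, Fin.val_succ, Fin.val_castSucc, Nat.cast_succ, add_assoc,
        add_comm (1 : ℤ)]
  refine ⟨fun j => U j 0, fun j => ?_, fun i => ?_⟩
  · simp only [hU, hsum]
  · have h := hU i.castSucc j₀
    rw [hinit, hW] at h
    exact h

/-- The kernel of a properly bounded difference operator of degree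
`d` is not contained in the kernel of any nonzero difference operator of degree
less than `d`. -/
theorem exists_mem_kernel_not_in_kernel_of_lower_degree
    {R : Type*} [Ring R] {d : ℕ} (hd : 1 ≤ d) (α : Fin (d + 1) → ℤ → R)
    (h0 : ∀ j : ℤ, IsUnit (α 0 j)) (hdu : ∀ j : ℤ, IsUnit (α (Fin.last d) j))
    (β : Fin d → ℤ → R) (hβ : ∃ i : Fin d, ∃ j : ℤ, β i j ≠ 0) :
    ∃ a : ℤ → R,
      (∀ j : ℤ, ∑ i : Fin (d + 1), α i j * a (j + (i.val : ℤ)) = 0) ∧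
      ∃ j : ℤ, ∑ i : Fin d, β i j * a (j + (i.val : ℤ)) ≠ 0 := by
  obtain ⟨i₀, j₀, hne⟩ := hβ
  obtain ⟨a, ha, hwindow⟩ := exists_mem_kernel_eq_on_window α h0 hdu j₀ (Pi.single i₀ 1)
  refine ⟨a, ha, j₀, ?_⟩
  simpa [hwindow, Pi.single_apply] using hne
end

section
/- Let R be a stably finite ring, d ≥ 1, and let α, α' : Fin (d+1) → (ℤ → R) each define properly bounded difference operators D, D' of degree d (all α 0 j, α d j, α' 0 j, α' d j are units). Suppose D and D' have the same kernel: for every a : ℤ → R, (∀ j, Σ_{i=0}^{d} α i j * a (j + i) = 0) holds if and only if (∀ j, Σ_{i=0}^{d} α' i j * a (j + i) = 0). Then D' is obtained from D by left multiplication by a sequence of units: there exists c : ℤ → Rˣ such that α' i j = (c j) * α i j for all i ∈ Fin (d+1) and all j ∈ ℤ. -/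
/-- The one-sided sequence with initial values `v` on `{0, …, d - 1}` that is continued by the
recursion `f (n + d) = -(u n * ∑ i < d, β i n * f (n + i))`. -/
def recurrenceSolution {R : Type*} [Ring R] {d : ℕ} (β : Fin (d + 1) → ℕ → R) (u v : ℕ → R) :
    ℕ → R
  | n =>
    if _h : n < d then v n
    else -(u (n - d) * ∑ i : Fin d, β i.castSucc (n - d) * recurrenceSolution β u v (n - d + i))
  termination_by n => n
  decreasing_by have := i.isLt; omega

/-- A one-sided recurrence with invertible leading coefficients has a solution with any
prescribed initial values. -/
theorem exists_recurrence_solution {R : Type*} [Ring R] {d : ℕ} (β : Fin (d + 1) → ℕ → R)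
    (hβ : ∀ n, IsUnit (β (Fin.last d) n)) (v : ℕ → R) :
    ∃ f : ℕ → R, (∀ n < d, f n = v n) ∧
      ∀ n, ∑ i : Fin (d + 1), β i n * f (n + i.val) = 0 := by
  refine ⟨recurrenceSolution β (fun n => ((hβ n).unit⁻¹ : Rˣ)) v, fun n hn => ?_, fun n => ?_⟩
  · rw [recurrenceSolution, dif_pos hn]
  · rw [Fin.sum_univ_castSucc, Fin.val_last, recurrenceSolution.eq_1 _ _ _ (n + d),
      dif_neg (by omega), Nat.add_sub_cancel, mul_neg, ← mul_assoc, IsUnit.mul_val_inv, one_mul]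
    exact add_neg_cancel _

/-- Any values prescribed on a window of length `d` extend to an element of the kernel of a
properly bounded difference operator of degree `d`. -/
theorem exists_kernel_extension {R : Type*} [Ring R] {d : ℕ} (α : Fin (d + 1) → ℤ → R)
    (h0 : ∀ j : ℤ, IsUnit (α 0 j)) (hdu : ∀ j : ℤ, IsUnit (α (Fin.last d) j))
    (j₀ : ℤ) (v : ℕ → R) :
    ∃ a : ℤ → R, (∀ j : ℤ, ∑ i : Fin (d + 1), α i j * a (j + (i.val : ℤ)) = 0) ∧
      ∀ i < d, a (j₀ + (i : ℤ)) = v i := by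
  obtain ⟨f, hfv, hf⟩ := exists_recurrence_solution (fun i n => α i (j₀ + (n : ℤ)))
    (fun n => hdu _) v
  obtain ⟨b, hbv, hb⟩ := exists_recurrence_solution (fun i n => α i.rev (j₀ - 1 - (n : ℤ)))
    (fun n => by rw [Fin.rev_last]; exact h0 _) (fun n => v (d - 1 - n))
  let a : ℤ → R := fun j => if j₀ ≤ j then f (j - j₀).toNat else b (j₀ + d - 1 - j).toNat
  have ha_f (n : ℕ) : a (j₀ + n) = f n := by simp [a]
  have ha_b (n : ℕ) : a (j₀ + d - 1 - n) = b n := by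
    by_cases hn : n < d
    · rw [show j₀ + d - 1 - n = j₀ + ((d - 1 - n : ℕ) : ℤ) by omega, ha_f,
        hfv _ (by omega), hbv _ hn]
    · simp only [a]
      rw [if_neg (by omega)]
      congr 1
      omega
  refine ⟨a, fun j => ?_, fun i hi => by rw [ha_f, hfv i hi]⟩
  rcases le_or_gt j₀ j with hj | hj
  · obtain ⟨n, rfl⟩ : ∃ n : ℕ, j = j₀ + n := ⟨(j - j₀).toNat, by omega⟩
    rw [← hf n]
    refine Finset.sum_congr rfl fun i _ => ?_
    rw [← ha_f, Nat.cast_add, add_assoc]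
  · obtain ⟨n, rfl⟩ : ∃ n : ℕ, j = j₀ - 1 - n := ⟨(j₀ - 1 - j).toNat, by omega⟩
    rw [← hb n, ← Equiv.sum_comp Fin.revPerm]
    refine Finset.sum_congr rfl fun i _ => ?_
    rw [← ha_b, Fin.revPerm_apply, Fin.val_rev]
    congr 2
    have := i.isLt
    omega

/-- Over a stably finite ring, two properly bounded difference
operators of degree `d` with the same kernel differ by left multiplication by a
bi-infinite sequence of units. -/
theorem eq_unit_mul_of_same_kernel
    {R : Type*} [Ring R] (hSF : StablyFinite R) {d : ℕ} (hd : 1 ≤ d)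
    (α α' : Fin (d + 1) → ℤ → R)
    (h0 : ∀ j : ℤ, IsUnit (α 0 j)) (hdu : ∀ j : ℤ, IsUnit (α (Fin.last d) j))
    (h0' : ∀ j : ℤ, IsUnit (α' 0 j)) (hdu' : ∀ j : ℤ, IsUnit (α' (Fin.last d) j))
    (hker : ∀ a : ℤ → R,
      (∀ j : ℤ, ∑ i : Fin (d + 1), α i j * a (j + (i.val : ℤ)) = 0) ↔
      (∀ j : ℤ, ∑ i : Fin (d + 1), α' i j * a (j + (i.val : ℤ)) = 0)) :
    ∃ c : ℤ → Rˣ, ∀ (i : Fin (d + 1)) (j : ℤ), α' i j = (c j : R) * α i j := by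
  refine ⟨fun j => (hdu' j).unit * (hdu j).unit⁻¹, fun i j => ?_⟩
  induction i using Fin.lastCases with
  | last => rw [Units.val_mul, mul_assoc, IsUnit.val_inv_mul, mul_one, IsUnit.unit_spec]
  | cast k =>
    obtain ⟨a, ha, hav⟩ := exists_kernel_extension α h0 hdu j (Pi.single k.val 1)
    have window_sum (β : Fin (d + 1) → ℤ → R)
        (hβ : ∑ i : Fin (d + 1), β i j * a (j + (i.val : ℤ)) = 0) :
        β k.castSucc j = -(β (Fin.last d) j * a (j + d)) := by
      rw [Fin.sum_univ_castSucc, Finset.sum_eq_single k] at hβ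
      · rw [Fin.val_castSucc, hav _ k.isLt, Pi.single_eq_same, mul_one, Fin.val_last] at hβ
        exact eq_neg_of_add_eq_zero_left hβ
      · intro i _ hik
        rw [Fin.val_castSucc, hav _ i.isLt, Pi.single_eq_of_ne (by omega), mul_zero]
      · simp
    rw [window_sum α (ha j), window_sum α' ((hker a).1 ha j), Units.val_mul, mul_neg, mul_assoc,
      ← mul_assoc _ (α (Fin.last d) j), IsUnit.val_inv_mul, one_mul, IsUnit.unit_spec]
end

section
/- Let R be a stably finite ring, d ≥ 1, and let α : Fin (d+1) → (ℤ → R) define a properly bounded difference operator of degree d (α 0 j and α d j are units for all j). Let v : ℤ → (Fin d → R) be a sequence of vectors satisfying Σ_{i=0}^{d} (α i j) • v (j + i) = 0 for every j ∈ ℤ (scalar multiplication taken componentwise). For k ∈ ℤ, let V_k ∈ Matrix (Fin d) (Fin d) R be the matrix whose rows are v k, v (k+1), …, v (k+d−1). Then V_k is a unit in the matrix ring for some k ∈ ℤ if and only if V_k is a unit for every k ∈ ℤ. (Equivalently: d consecutive vectors of v form a basis of Fin d → R for some k if and only if they do for all k.) -/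
open Matrix Submodule in
/-- Over a stably finite ring, a square matrix is a unit iff its rows generate. -/
theorem StablyFinite.isUnit_matrix_iff_span_range_eq_top {R : Type*} [Ring R]
    (hSF : StablyFinite R) {n : ℕ} (M : Matrix (Fin n) (Fin n) R) :
    IsUnit M ↔ span R (Set.range M) = ⊤ := by
  have hrange : span R (Set.range M) = LinearMap.range M.vecMulLinear :=
    (range_vecMulLinear M).symm
  rw [hrange, LinearMap.range_eq_top]
  constructor
  · rintro ⟨u, rfl⟩ y
    exact ⟨y ᵥ* (↑u⁻¹ : Matrix (Fin n) (Fin n) R), by simp [vecMul_vecMul]⟩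
  · intro hsurj
    have hinj : Function.Injective fun x => x ᵥ* M := hSF n _ hsurj
    obtain ⟨W, hW⟩ := vecMul_surjective_iff_exists_left_inverse.mp hsurj
    refine isUnit_iff_exists.mpr ⟨W, ?_, hW⟩
    refine ext_of_single_vecMul fun i => hinj ?_
    simp only [vecMul_vecMul, Matrix.mul_assoc, hW, Matrix.mul_one, Matrix.one_mul]

/-- If a combination with one unit coefficient vanishes, the corresponding vector lies in any
submodule containing the others. -/
theorem Submodule.mem_of_isUnit_smul_add_sum_eq_zero {R M ι : Type*} [Ring R] [AddCommGroup M]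
    [Module R M] [Fintype ι] (p : Submodule R M) {a : R} (ha : IsUnit a) {x : M} {c : ι → R}
    {w : ι → M} (h : a • x + ∑ i, c i • w i = 0) (hw : ∀ i, w i ∈ p) : x ∈ p := by
  have hmem : a • x ∈ p := by
    rw [eq_neg_of_add_eq_zero_left h]
    exact p.neg_mem (p.sum_mem fun i _ => p.smul_mem _ (hw i))
  exact (p.smul_mem_iff_of_isUnit ha).mp hmem

open Submodule in
/-- Consecutive windows of a solution of a properly bounded difference equation have the same
span. -/
theorem span_range_window_succ {R M : Type*} [Ring R] [AddCommGroup M] [Module R M] {d : ℕ}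
    (α : Fin (d + 1) → ℤ → R)
    (h0 : ∀ j : ℤ, IsUnit (α 0 j)) (hdu : ∀ j : ℤ, IsUnit (α (Fin.last d) j))
    (v : ℤ → M) (hv : ∀ j : ℤ, ∑ i : Fin (d + 1), α i j • v (j + (i.val : ℤ)) = 0) (k : ℤ) :
    span R (Set.range fun i : Fin d => v (k + 1 + (i.val : ℤ))) =
      span R (Set.range fun i : Fin d => v (k + (i.val : ℤ))) := by
  have mem (m : ℤ) (i : ℕ) (hi : i < d) :
      v (m + i) ∈ span R (Set.range fun i : Fin d => v (m + (i.val : ℤ))) :=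
    subset_span ⟨⟨i, hi⟩, rfl⟩
  apply le_antisymm <;> rw [span_le] <;> rintro _ ⟨⟨i, hi⟩, rfl⟩ <;>
    rw [SetLike.mem_coe]
  · rcases Nat.lt_or_ge (i + 1) d with h | h
    · convert mem k (i + 1) h using 2
      push_cast
      ring
    · have hk := hv k
      rw [Fin.sum_univ_castSucc, add_comm] at hk
      convert mem_of_isUnit_smul_add_sum_eq_zero _ (hdu k) hk fun i => mem k i i.isLt using 2
      simp only [Fin.val_last]
      omega
  · rcases i with _ | i
    · have hk := hv k
      rw [Fin.sum_univ_succ] at hk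
      refine mem_of_isUnit_smul_add_sum_eq_zero _ (h0 k) hk fun i => ?_
      convert mem (k + 1) i i.isLt using 2
      push_cast [Fin.val_succ]
      ring
    · convert mem (k + 1) i (by omega) using 2
      push_cast
      ring


/-- (Wronskian-type statement.) Over a stably finite ring, if a
sequence of vectors `v : ℤ → (Fin d → R)` is annihilated by a properly bounded
difference operator of degree `d`, then the matrix `V_k` with rows
`v k, …, v (k + d - 1)` is a unit for some `k` iff it is a unit for every `k`. -/
theorem wronskian_isUnit_iff_forall
    {R : Type*} [Ring R] (hSF : StablyFinite R) {d : ℕ} (hd : 1 ≤ d)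
    (α : Fin (d + 1) → ℤ → R)
    (h0 : ∀ j : ℤ, IsUnit (α 0 j)) (hdu : ∀ j : ℤ, IsUnit (α (Fin.last d) j))
    (v : ℤ → Fin d → R)
    (hv : ∀ j : ℤ, ∑ i : Fin (d + 1), α i j • v (j + (i.val : ℤ)) = 0) :
    (∃ k : ℤ, IsUnit (Matrix.of (fun i : Fin d => v (k + (i.val : ℤ))) :
        Matrix (Fin d) (Fin d) R)) ↔
      (∀ k : ℤ, IsUnit (Matrix.of (fun i : Fin d => v (k + (i.val : ℤ))) :
        Matrix (Fin d) (Fin d) R)) := by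
  refine ⟨fun ⟨k, hk⟩ m => ?_, fun h => ⟨0, h 0⟩⟩
  rw [hSF.isUnit_matrix_iff_span_range_eq_top] at hk ⊢
  have hstep := span_range_window_succ α h0 hdu v hv
  induction m using Int.inductionOn' (b := k) with
  | zero => exact hk
  | succ m _ ih => exact (hstep m).trans ih
  | pred m _ ih =>
    have hm := hstep (m - 1)
    rw [sub_add_cancel] at hm
    exact hm.symm.trans ih
end

section
/- Let R be a stably finite ring and d ≥ 1. Let v : ℤ → (Fin d → R) be a polygon in the sense that for every k ∈ ℤ the matrix with rows v k, v (k+1), …, v (k+d−1) is a unit in Matrix (Fin d) (Fin d) R. Then there exist coefficients α : Fin d → (ℤ → R) such that α 0 j is a unit of R for every j ∈ ℤ and v (j + d) = Σ_{i=0}^{d-1} (α i j) • v (j + i) for all j ∈ ℤ. (Hence every polygon is annihilated by a properly bounded difference operator of degree d.) -/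
/-- If `Fin.cons x u` and `Fin.snoc u y` are linearly independent and each of `x`, `y` is a
combination of the other one and the family `u`, then the coefficient of `x` in `y` is a unit. -/
lemma isUnit_of_linearIndependent_cons_of_snoc {R M : Type*} [Ring R] [AddCommGroup M]
    [Module R M] {n : ℕ} {x y : M} {u : Fin n → M}
    (hx : LinearIndependent R (Fin.cons x u : Fin (n + 1) → M))
    (hy : LinearIndependent R (Fin.snoc u y : Fin (n + 1) → M))
    {a b : R} {p q : Fin n → R} (hyx : y = a • x + ∑ i, p i • u i)
    (hxy : x = ∑ i, q i • u i + b • y) : IsUnit a := by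
  have hba : b * a - 1 = 0 := by
    have h := Fintype.linearIndependent_iff.1 hx
      (Fin.cons (b * a - 1) fun i => q i + b * p i) ?_ 0
    · simpa using h
    · have e : x = ∑ i, q i • u i + b • (a • x + ∑ i, p i • u i) := hyx ▸ hxy
      simp only [Fin.sum_univ_succ, Fin.cons_zero, Fin.cons_succ, sub_smul, add_smul, one_smul,
        mul_smul, Finset.sum_add_distrib, ← Finset.smul_sum]
      rw [smul_add] at e
      nth_rewrite 2 [e]
      abel
  have hab : a * b - 1 = 0 := by
    have h := Fintype.linearIndependent_iff.1 hy
      (Fin.snoc (fun i => a * q i + p i) (a * b - 1)) ?_ (Fin.last n)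
    · simpa using h
    · have e : y = a • (∑ i, q i • u i + b • y) + ∑ i, p i • u i := hxy ▸ hyx
      simp only [Fin.sum_univ_castSucc, Fin.snoc_last, Fin.snoc_castSucc, sub_smul, add_smul,
        one_smul, mul_smul, Finset.sum_add_distrib, ← Finset.smul_sum]
      rw [smul_add] at e
      nth_rewrite 2 [e]
      abel
  exact ⟨⟨a, b, sub_eq_zero.1 hab, sub_eq_zero.1 hba⟩, rfl⟩

/-- The rows of an invertible matrix span. -/
lemma exists_eq_sum_smul_row_of_isUnit {R ι : Type*} [Ring R] [Fintype ι] [DecidableEq ι]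
    {A : Matrix ι ι R} (hA : IsUnit A) (w : ι → R) : ∃ c : ι → R, w = ∑ i, c i • A i := by
  obtain ⟨B, hB⟩ := hA.exists_left_inv
  refine ⟨Matrix.vecMul w B, ?_⟩
  rw [← Matrix.vecMul_eq_sum, Matrix.vecMul_vecMul, hB, Matrix.vecMul_one]

/-- The rows of an invertible matrix are linearly independent. -/
lemma linearIndependent_row_of_isUnit {R ι : Type*} [Ring R] [Fintype ι] [DecidableEq ι]
    {A : Matrix ι ι R} (hA : IsUnit A) : LinearIndependent R fun i => A i := by
  obtain ⟨B, hB⟩ := hA.exists_right_inv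
  refine Fintype.linearIndependent_iff.2 fun g hg => ?_
  rw [← Matrix.vecMul_eq_sum] at hg
  have h : Matrix.vecMul g (A * B) = 0 := by
    rw [← Matrix.vecMul_vecMul, hg, Matrix.zero_vecMul]
  rw [hB, Matrix.vecMul_one] at h
  exact congrFun h

/-- Over a stably finite ring, every polygon `v : ℤ → (Fin d → R)`
(each `d` consecutive terms form a basis, i.e. the matrix with those rows is a
unit) satisfies a recurrence `v (j + d) = Σ_{i<d} (α i j) • v (j + i)` whose
zeroth coefficient `α 0 j` is a unit for every `j`; i.e., every polygon is
annihilated by a properly bounded difference operator of degree `d`. -/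
theorem polygon_satisfies_properly_bounded_recurrence
    {R : Type*} [Ring R] (hSF : StablyFinite R) {d : ℕ} (hd : 1 ≤ d)
    (v : ℤ → Fin d → R)
    (hv : ∀ k : ℤ, IsUnit (Matrix.of (fun i : Fin d => v (k + (i.val : ℤ))) :
        Matrix (Fin d) (Fin d) R)) :
    ∃ α : Fin d → ℤ → R,
      (∀ j : ℤ, IsUnit (α ⟨0, hd⟩ j)) ∧
      ∀ j : ℤ, v (j + (d : ℤ)) = ∑ i : Fin d, α i j • v (j + (i.val : ℤ)) := by
  have hspan (j : ℤ) (w : Fin d → R) : ∃ c : Fin d → R, w = ∑ i, c i • v (j + (i.val : ℤ)) :=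
    exists_eq_sum_smul_row_of_isUnit (hv j) w
  have hindep (j : ℤ) : LinearIndependent R fun i : Fin d => v (j + (i.val : ℤ)) :=
    linearIndependent_row_of_isUnit (hv j)
  choose c hc using hspan
  refine ⟨fun i j => c j (v (j + d)) i, fun j => ?_, fun j => hc j _⟩
  obtain ⟨n, rfl⟩ : ∃ n, d = n + 1 := ⟨d - 1, by omega⟩
  have hyx := hc j (v (j + (n + 1 : ℕ)))
  have hxy := hc (j + 1) (v j)
  have hsucc (i : Fin n) : j + (i.succ.val : ℤ) = j + 1 + i.val := by
    simp only [Fin.val_succ]; push_cast; ring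
  have hlast : j + 1 + ((Fin.last n).val : ℤ) = j + (n + 1 : ℕ) := by
    simp only [Fin.val_last]; push_cast; ring
  rw [Fin.sum_univ_succ] at hyx
  rw [Fin.sum_univ_castSucc] at hxy
  simp only [hsucc, Fin.val_zero, Nat.cast_zero, add_zero] at hyx
  simp only [hlast, Fin.val_castSucc] at hxy
  have hcons : (fun i : Fin (n + 1) => v (j + (i.val : ℤ))) =
      Fin.cons (v j) fun i : Fin n => v (j + 1 + i.val) := by
    ext1 i
    refine Fin.cases ?_ (fun i => ?_) i
    · simp
    · simp only [Fin.cons_succ, hsucc]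
  have hsnoc : (fun i : Fin (n + 1) => v (j + 1 + (i.val : ℤ))) =
      Fin.snoc (fun i : Fin n => v (j + 1 + i.val)) (v (j + (n + 1 : ℕ))) := by
    ext1 i
    refine Fin.lastCases ?_ (fun i => ?_) i
    · simp only [Fin.snoc_last, hlast]
    · simp only [Fin.snoc_castSucc, Fin.val_castSucc]
  exact isUnit_of_linearIndependent_cons_of_snoc (hcons ▸ hindep j) (hsnoc ▸ hindep (j + 1))
    hyx hxy
end

section
/- Let R be a ring, n ≥ 1, and let α, β : ℤ → R be n-periodic sequences, i.e. α (i + n) = α i and β (i + n) = β i for all i ∈ ℤ. Then for every k ∈ ℤ, the element (Σ_{i=1}^{n} α i * β (i + k)) − (Σ_{i=1}^{n} β i * α (i − k)) of R lies in the additive subgroup [R, R] of R generated by all commutators a*b − b*a with a, b ∈ R. (This is the cyclic property Tr(Q Q̂) = Tr(Q̂ Q) of the trace of n-periodic pseudo-difference operators, for the monomial operators Q = α T^k and Q̂ = β T^{−k}.) -/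
/-- A full-period window sum of a periodic sequence does not change when shifted by one. -/
theorem sum_range_shift_succ_of_periodic {M : Type*} [AddCommGroup M] {n : ℕ} {f : ℤ → M}
    (hf : Function.Periodic f (n : ℤ)) (c : ℤ) :
    ∑ i ∈ Finset.range n, f ((i : ℤ) + (c + 1)) = ∑ i ∈ Finset.range n, f ((i : ℤ) + c) := by
  have h := (Finset.sum_range_succ' (fun i : ℕ => f ((i : ℤ) + c)) n).symm.trans
    (Finset.sum_range_succ (fun i : ℕ => f ((i : ℤ) + c)) n)
  have hend : f ((n : ℤ) + c) = f (((0 : ℕ) : ℤ) + c) := by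
    rw [add_comm, hf c, Nat.cast_zero, zero_add]
  rw [hend] at h
  simpa only [Nat.cast_succ, add_assoc, add_comm (1 : ℤ) c] using add_right_cancel h

/-- A full-period window sum of a periodic sequence does not depend on the window. -/
theorem sum_range_shift_of_periodic {M : Type*} [AddCommGroup M] {n : ℕ} {f : ℤ → M}
    (hf : Function.Periodic f (n : ℤ)) (c d : ℤ) :
    ∑ i ∈ Finset.range n, f ((i : ℤ) + c) = ∑ i ∈ Finset.range n, f ((i : ℤ) + d) := by
  have hper : Function.Periodic (fun c : ℤ => ∑ i ∈ Finset.range n, f ((i : ℤ) + c)) 1 :=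
    sum_range_shift_succ_of_periodic hf
  simpa using hper.int_mul (c - d) d

/-- Cyclic property of the trace of `n`-periodic pseudo-difference
operators: for `n`-periodic sequences `α, β : ℤ → R` and any `k ∈ ℤ`, the element
`(Σ_{i=1}^{n} α i * β (i + k)) − (Σ_{i=1}^{n} β i * α (i − k))` lies in the
additive subgroup `[R, R]` generated by commutators. -/
theorem trace_cyclic_property
    {R : Type*} [Ring R] {n : ℕ} (hn : 1 ≤ n) (α β : ℤ → R)
    (hα : ∀ i : ℤ, α (i + (n : ℤ)) = α i) (hβ : ∀ i : ℤ, β (i + (n : ℤ)) = β i)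
    (k : ℤ) :
    (∑ i ∈ Finset.range n, α ((i : ℤ) + 1) * β (((i : ℤ) + 1) + k)) -
      (∑ i ∈ Finset.range n, β ((i : ℤ) + 1) * α (((i : ℤ) + 1) - k)) ∈
        AddSubgroup.closure {x : R | ∃ a b : R, x = a * b - b * a} := by
  have hf : Function.Periodic (fun j : ℤ => β j * α (j - k)) (n : ℤ) := fun j => by
    simp only [add_sub_right_comm j (n : ℤ) k, hα, hβ]
  rw [sum_range_shift_of_periodic hf 1 (1 + k), ← Finset.sum_sub_distrib]
  refine AddSubgroup.sum_mem _ fun i _ => AddSubgroup.subset_closure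
    ⟨α ((i : ℤ) + 1), β ((i : ℤ) + 1 + k), ?_⟩
  rw [← add_assoc, add_sub_cancel_right]
end
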